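/- Let f : ℝ^n → ℝ be twice continuously differentiable, let J be a set of coordinates, and suppose there are constants 0 < m ≤ M such that m‖v‖₂² ≤ ⟨v, ∇²f(z) v⟩ ≤ M‖v‖₂² for all z ∈ ℝ^n and all v ∈ ℝ^n supported on J. Then for every η > 0 and all x, y ∈ ℝ^n with x − y supported on J, ‖(x − y) − η·((∇f(x) − ∇f(y)) restricted to J)‖₂ ≤ √(1 + η²M² − 2ηm) · ‖x − y‖₂. -/

import Mathlib

open scoped RealInnerProductSpace

/-- `(v)` restricted to `J`: the vector agreeing with `v` on `J` and zero elsewhere. -/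
noncomputable def restrictTo {n : ℕ} (J : Finset (Fin n)) (v : EuclideanSpace ℝ (Fin n)) :
    EuclideanSpace ℝ (Fin n) :=
  (WithLp.equiv 2 _).symm (fun i => if i ∈ J then v i else 0)

/-!
Let `K` be the subspace of the vectors supported on `J`. On the affine subspace `y + K`, the
function `f` becomes `g u = f (y + u)` on `K`, whose gradient is the orthogonal projection of `∇f`
and whose Hessian is the compression of `∇²f` to `K`. This reduces the claim to the case where the
Hessian bounds hold in every direction. There the Hessian is symmetric, so the bounds on its
quadratic form bound its operator norm by `M`. Hence `d = x - y` and `w = ∇f x - ∇f y` satisfy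
`‖w‖ ≤ M ‖d‖` and `m ‖d‖² ≤ ⟪d, w⟫`, and it remains to expand `‖d - η w‖²`.
-/

section InnerProductSpace

variable {E : Type*} [NormedAddCommGroup E] [InnerProductSpace ℝ E]

theorem norm_sub_smul_le_sqrt_mul_norm {m M η : ℝ} (hη : 0 ≤ η) {d w : E}
    (hinner : m * ‖d‖ ^ 2 ≤ ⟪d, w⟫) (hnorm : ‖w‖ ≤ M * ‖d‖) :
    ‖d - η • w‖ ≤ √(1 + η ^ 2 * M ^ 2 - 2 * η * m) * ‖d‖ := by
  have hsq : ‖d - η • w‖ ^ 2 ≤ (1 + η ^ 2 * M ^ 2 - 2 * η * m) * ‖d‖ ^ 2 :=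
    calc ‖d - η • w‖ ^ 2 = ‖d‖ ^ 2 - 2 * η * ⟪d, w⟫ + η ^ 2 * ‖w‖ ^ 2 := by
          rw [norm_sub_sq_real, real_inner_smul_right, norm_smul, mul_pow, Real.norm_eq_abs,
            sq_abs]
          ring
      _ ≤ ‖d‖ ^ 2 - 2 * η * (m * ‖d‖ ^ 2) + η ^ 2 * (M * ‖d‖) ^ 2 := by gcongr
      _ = (1 + η ^ 2 * M ^ 2 - 2 * η * m) * ‖d‖ ^ 2 := by ring
  calc ‖d - η • w‖ ≤ √((1 + η ^ 2 * M ^ 2 - 2 * η * m) * ‖d‖ ^ 2) := Real.le_sqrt_of_sq_le hsq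
    _ = √(1 + η ^ 2 * M ^ 2 - 2 * η * m) * ‖d‖ := by
      rw [Real.sqrt_mul' _ (sq_nonneg _), Real.sqrt_sq (norm_nonneg d)]

theorem opNorm_le_of_isSymmetric_of_abs_inner_le {T : E →L[ℝ] E} (hT : T.IsSymmetric) {C : ℝ}
    (hC : 0 ≤ C) (h : ∀ v, |⟪v, T v⟫| ≤ C * ‖v‖ ^ 2) : ‖T‖ ≤ C := by
  rw [T.norm_eq_iSup_rayleighQuotient hT]
  refine ciSup_le fun v => ?_
  rw [ContinuousLinearMap.rayleighQuotient, T.reApplyInnerSelf_apply, RCLike.re_to_real,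
    real_inner_comm, abs_div, abs_sq]
  exact div_le_of_le_mul₀ (sq_nonneg _) hC (h v)

theorem mul_norm_sub_sq_le_inner_of_fderiv {F : E → E} (hF : Differentiable ℝ F) {m : ℝ}
    (h : ∀ z v, m * ‖v‖ ^ 2 ≤ ⟪v, fderiv ℝ F z v⟫) (x y : E) :
    m * ‖x - y‖ ^ 2 ≤ ⟪x - y, F x - F y⟫ := by
  have hderiv : ∀ z ∈ Set.univ, HasFDerivWithinAt (fun z => ⟪x - y, F z⟫)
      ((innerSL ℝ (x - y)).comp (fderiv ℝ F z)) Set.univ z := fun z _ =>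
    ((innerSL ℝ (x - y)).hasFDerivAt.comp z (hF z).hasFDerivAt).hasFDerivWithinAt
  obtain ⟨z, -, hz⟩ := domain_mvt hderiv convex_univ (Set.mem_univ y) (Set.mem_univ x)
  rw [inner_sub_right, hz]
  exact h z (x - y)

theorem hasFDerivAt_orthogonalProjectionOnto_comp_add_coe {K : Submodule ℝ E}
    [K.HasOrthogonalProjection] {F : E → E} {y : E} {u : K}
    (hF : DifferentiableAt ℝ F (y + u)) :
    HasFDerivAt (fun u : K => K.orthogonalProjectionOnto (F (y + u)))
      (K.orthogonalProjectionOnto ∘L fderiv ℝ F (y + u) ∘L K.subtypeL) u :=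
  K.orthogonalProjectionOnto.hasFDerivAt.comp u <|
    hF.hasFDerivAt.comp (f := fun u : K => y + (u : E)) u (K.subtypeL.hasFDerivAt.const_add y)

end InnerProductSpace

section Gradient

variable {E : Type*} [NormedAddCommGroup E] [InnerProductSpace ℝ E] [CompleteSpace E] {f : E → ℝ}

theorem differentiable_gradient_of_contDiff (hf : ContDiff ℝ 2 f) :
    Differentiable ℝ (gradient f) :=
  (InnerProductSpace.toDual ℝ E).symm.differentiable.comp
    ((hf.fderiv_right (m := 1) (by norm_num)).differentiable one_ne_zero)

theorem isSymmetric_fderiv_gradient {z : E} (hf : ∀ᶠ x in nhds z, DifferentiableAt ℝ f x)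
    (hf' : DifferentiableAt ℝ (gradient f) z) : (fderiv ℝ (gradient f) z).IsSymmetric := by
  intro v w
  have hderiv := (InnerProductSpace.toDual ℝ E).toContinuousLinearEquiv.hasFDerivAt.comp z
    hf'.hasFDerivAt
  have hsymm : ⟪fderiv ℝ (gradient f) z v, w⟫ = ⟪fderiv ℝ (gradient f) z w, v⟫ :=
    second_derivative_symmetric_of_eventually
      (hf.mono fun x hx => hx.hasGradientAt.hasFDerivAt) hderiv v w
  exact hsymm.trans (real_inner_comm _ _)

theorem norm_sub_smul_gradient_sub_le (hf : Differentiable ℝ f)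
    (hf' : Differentiable ℝ (gradient f)) {m M : ℝ} (hmM : |m| ≤ M)
    (hHess : ∀ z v, m * ‖v‖ ^ 2 ≤ ⟪v, fderiv ℝ (gradient f) z v⟫ ∧
      ⟪v, fderiv ℝ (gradient f) z v⟫ ≤ M * ‖v‖ ^ 2) {η : ℝ} (hη : 0 ≤ η) (x y : E) :
    ‖(x - y) - η • (gradient f x - gradient f y)‖ ≤
      √(1 + η ^ 2 * M ^ 2 - 2 * η * m) * ‖x - y‖ := by
  have hHess_norm (z : E) : ‖fderiv ℝ (gradient f) z‖ ≤ M := by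
    refine opNorm_le_of_isSymmetric_of_abs_inner_le
      (isSymmetric_fderiv_gradient (.of_forall hf) (hf' z)) ((abs_nonneg m).trans hmM)
      fun v => abs_le.2 ⟨?_, (hHess z v).2⟩
    calc -(M * ‖v‖ ^ 2) = -M * ‖v‖ ^ 2 := by ring
      _ ≤ m * ‖v‖ ^ 2 := by gcongr; exact neg_le_of_abs_le hmM
      _ ≤ ⟪v, fderiv ℝ (gradient f) z v⟫ := (hHess z v).1
  have hinner : m * ‖x - y‖ ^ 2 ≤ ⟪x - y, gradient f x - gradient f y⟫ :=
    mul_norm_sub_sq_le_inner_of_fderiv hf' (fun z v => (hHess z v).1) x y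
  have hnorm : ‖gradient f x - gradient f y‖ ≤ M * ‖x - y‖ :=
    convex_univ.norm_image_sub_le_of_norm_fderiv_le (fun z _ => hf' z)
      (fun z _ => hHess_norm z) (Set.mem_univ y) (Set.mem_univ x)
  exact norm_sub_smul_le_sqrt_mul_norm hη hinner hnorm

section Subspace

variable {K : Submodule ℝ E} [CompleteSpace K]

theorem hasGradientAt_comp_add_coe {y : E} {u : K} (hf : DifferentiableAt ℝ f (y + u)) :
    HasGradientAt (fun u : K => f (y + u)) (K.orthogonalProjectionOnto (gradient f (y + u))) u := by
  have hderiv : HasFDerivAt (fun u : K => f (y + u)) (fderiv ℝ f (y + u) ∘L K.subtypeL) u :=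
    hf.hasFDerivAt.comp (f := fun u : K => y + (u : E)) u (K.subtypeL.hasFDerivAt.const_add y)
  rw [hasGradientAt_iff_hasFDerivAt]
  refine hderiv.congr_fderiv ?_
  ext v
  simp

theorem restricted_gradient_step_contraction_general (hf : Differentiable ℝ f)
    (hf' : Differentiable ℝ (gradient f)) {m M : ℝ} (hmM : |m| ≤ M)
    (hHess : ∀ z, ∀ v ∈ K, m * ‖v‖ ^ 2 ≤ ⟪v, fderiv ℝ (gradient f) z v⟫ ∧
      ⟪v, fderiv ℝ (gradient f) z v⟫ ≤ M * ‖v‖ ^ 2)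
    {η : ℝ} (hη : 0 ≤ η) {x y : E} (hxy : x - y ∈ K) :
    ‖(x - y) - η • K.starProjection (gradient f x - gradient f y)‖ ≤
      √(1 + η ^ 2 * M ^ 2 - 2 * η * m) * ‖x - y‖ := by
  let g (u : K) : ℝ := f (y + u)
  have hg (u : K) : HasGradientAt g (K.orthogonalProjectionOnto (gradient f (y + u))) u :=
    hasGradientAt_comp_add_coe (hf (y + u))
  have hg' (u : K) : HasFDerivAt (gradient g)
      (K.orthogonalProjectionOnto ∘L fderiv ℝ (gradient f) (y + u) ∘L K.subtypeL) u := by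
    rw [gradient_eq hg]
    exact hasFDerivAt_orthogonalProjectionOnto_comp_add_coe (hf' (y + u))
  have hstep := norm_sub_smul_gradient_sub_le (f := g) (fun u => (hg u).differentiableAt)
    (fun u => (hg' u).differentiableAt) hmM
    (fun u v => by simpa [(hg' u).fderiv] using hHess (y + u) v v.2) hη ⟨x - y, hxy⟩ 0
  rw [gradient_eq hg, sub_zero, ← map_sub] at hstep
  simpa using hstep

end Subspace

end Gradient

/-- The coordinate subspace of the vectors of `ℝⁿ` supported on `J`, onto which `restrictTo J`
is the orthogonal projection. It is `Pi.spanSubset` carried over to the Euclidean norm. -/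
noncomputable def supportedOn {n : ℕ} (J : Finset (Fin n)) :
    Submodule ℝ (EuclideanSpace ℝ (Fin n)) :=
  (Pi.spanSubset ℝ (J : Set (Fin n))).comap (WithLp.linearEquiv 2 ℝ (Fin n → ℝ)).toLinearMap

theorem mem_supportedOn {n : ℕ} {J : Finset (Fin n)} {v : EuclideanSpace ℝ (Fin n)} :
    v ∈ supportedOn J ↔ ∀ i ∉ J, v i = 0 := by
  simp [supportedOn, Pi.mem_spanSubset_iff]

theorem starProjection_supportedOn {n : ℕ} (J : Finset (Fin n)) (v : EuclideanSpace ℝ (Fin n)) :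
    (supportedOn J).starProjection v = restrictTo J v := by
  refine Submodule.eq_starProjection_of_mem_of_inner_eq_zero
    (mem_supportedOn.2 fun i hi => by simp [restrictTo, hi]) fun w hw => ?_
  rw [PiLp.inner_apply]
  refine Finset.sum_eq_zero fun i _ => ?_
  by_cases hi : i ∈ J
  · simp [restrictTo, hi]
  · simp [mem_supportedOn.1 hw i hi]

theorem restricted_gradient_step_contraction
    (n : ℕ) (f : EuclideanSpace ℝ (Fin n) → ℝ) (hf : ContDiff ℝ 2 f)
    (J : Finset (Fin n))
    (m M : ℝ) (hm : 0 < m) (hmM : m ≤ M)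
    (hHess : ∀ (z v : EuclideanSpace ℝ (Fin n)), (∀ i ∉ J, v i = 0) →
      m * ‖v‖ ^ 2 ≤ ⟪v, fderiv ℝ (gradient f) z v⟫ ∧
        ⟪v, fderiv ℝ (gradient f) z v⟫ ≤ M * ‖v‖ ^ 2) :
    ∀ (η : ℝ), 0 < η → ∀ (x y : EuclideanSpace ℝ (Fin n)), (∀ i ∉ J, (x - y) i = 0) →
      ‖(x - y) - η • restrictTo J (gradient f x - gradient f y)‖ ≤
        Real.sqrt (1 + η ^ 2 * M ^ 2 - 2 * η * m) * ‖x - y‖ := by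
  intro η hη x y hxy
  rw [← starProjection_supportedOn]
  exact restricted_gradient_step_contraction_general (hf.differentiable two_ne_zero)
    (differentiable_gradient_of_contDiff hf) ((abs_of_pos hm).trans_le hmM)
    (fun z v hv => hHess z v (mem_supportedOn.1 hv)) hη.le (mem_supportedOn.2 hxy)
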